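/- arXiv:2603.00752 — 6 statements merged into one kernel-verified Lean document; each statement's English description precedes it below -/
import Mathlib

section
/- Fix n ≥ 6. Let G = A_{n−1} be the anticycle on [n−1], let F be the star on [n] with edges {i, n} for 1 ≤ i ≤ n−3, and let H_n be the graph on [n] with E(H_n) = E(G) ∪ E(F). Then for every integer s ≥ 2, I_{H_n}^s = Σ_{i+j=s, i,j ≥ 0} I_G^i · I_F^j. -/
open MvPolynomial

noncomputable section

/-- The edge ideal of a finite simple graph on vertex set `Fin n`
(vertex with index `v` corresponds to the vertex `v+1` of `[n]`). -/
def edgeIdeal (K : Type*) [Field K] {n : ℕ} (G : SimpleGraph (Fin n)) :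
    Ideal (MvPolynomial (Fin n) K) :=
  Ideal.span {p | ∃ i j : Fin n, G.Adj i j ∧ p = X i * X j}

/-- `d` is the exponent vector of a minimal monomial generator of `I`. -/
def IsMinGen {K : Type*} [Field K] {n : ℕ} (I : Ideal (MvPolynomial (Fin n) K))
    (d : Fin n →₀ ℕ) : Prop :=
  monomial d (1 : K) ∈ I ∧
    ∀ e : Fin n →₀ ℕ, e ≤ d → e ≠ d → monomial e (1 : K) ∉ I

/-- A list of exponent vectors `L = [d_1, …, d_r]` is a linear quotient ordering if
for every `i ≥ 2` the colon ideal `(x^{d_1}, …, x^{d_{i-1}}) : x^{d_i}` is generated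
by a subset of the variables. -/
def IsLinQuotOrder (K : Type*) [Field K] {n : ℕ} (L : List (Fin n →₀ ℕ)) : Prop :=
  ∀ i : Fin L.length, 0 < i.val →
    ∃ V : Set (Fin n),
      Submodule.colon
        (Ideal.span {m : MvPolynomial (Fin n) K |
          ∃ k : Fin L.length, k.val < i.val ∧ m = monomial (L.get k) 1})
        (Ideal.span {monomial (L.get i) (1 : K)}) =
      Ideal.span ((fun v : Fin n => (X v : MvPolynomial (Fin n) K)) '' V)

/-- A monomial ideal has linear quotients if it is principal or admits a
linear quotient ordering of its minimal monomial generators. -/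
def HasLinearQuotients {K : Type*} [Field K] {n : ℕ}
    (I : Ideal (MvPolynomial (Fin n) K)) : Prop :=
  (∃ p, I = Ideal.span {p}) ∨
    ∃ L : List (Fin n →₀ ℕ), L.Nodup ∧ (∀ d, d ∈ L ↔ IsMinGen I d) ∧ IsLinQuotOrder K L

/-- `lexLt d e` : the monomial `x^d` is lexicographically smaller than `x^e`
for the lexicographic order induced by `x_n > x_{n-1} > … > x_1`. -/
def lexLt {n : ℕ} (d e : Fin n →₀ ℕ) : Prop :=
  ∃ k : Fin n, d k < e k ∧ ∀ m : Fin n, k < m → d m = e m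

/-- `L` lists the minimal monomial generators of `I` in decreasing lexicographic order. -/
def LexDecMinGenOrder {K : Type*} [Field K] {n : ℕ} (I : Ideal (MvPolynomial (Fin n) K))
    (L : List (Fin n →₀ ℕ)) : Prop :=
  List.Pairwise (fun d e => lexLt e d) L ∧ ∀ d, d ∈ L ↔ IsMinGen I d

/-- The anticycle on `[m]` : `{i,j}` is an edge iff `i ≠ j` and `i - j ≢ ±1 (mod m)`. -/
def anticycle (m : ℕ) : SimpleGraph (Fin m) where
  Adj i j := i ≠ j ∧ (i.val + 1) % m ≠ j.val ∧ (j.val + 1) % m ≠ i.val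
  symm := ⟨fun i j h => ⟨h.1.symm, h.2.2, h.2.1⟩⟩
  loopless := ⟨fun i h => h.1 rfl⟩

/-- The anticycle on `[m]` regarded as a graph on the vertex set `[n]`. -/
def anticycleIn (n m : ℕ) : SimpleGraph (Fin n) where
  Adj i j := i ≠ j ∧ i.val < m ∧ j.val < m ∧ (i.val + 1) % m ≠ j.val ∧ (j.val + 1) % m ≠ i.val
  symm := ⟨fun i j h => ⟨h.1.symm, h.2.2.1, h.2.1, h.2.2.2.2, h.2.2.2.1⟩⟩
  loopless := ⟨fun i h => h.1 rfl⟩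

/-- The star on `[n]` with edges `{i, n}` for `1 ≤ i ≤ n - 3`
(in the `0`-indexed picture: edges `{i, n-1}` for `i ≤ n - 4`). -/
def starF (n : ℕ) : SimpleGraph (Fin n) :=
  SimpleGraph.fromRel (fun i j => i.val + 4 ≤ n ∧ j.val = n - 1)

/-- `AgreeOrder n s i j t` : the degree-`s` monomials with ascending (0-indexed)
index sequences `i` and `j` agree in order `t`. -/
def AgreeOrder (n s : ℕ) (i j : ℕ → Fin n) (t : ℕ) : Prop :=
  if t = 0 then j (s - 1) < i (s - 1)
  else (∀ l, s - t ≤ l → l ≤ s - 1 → i l = j l) ∧ i (s - t - 1) ≠ j (s - t - 1)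

theorem edgeIdeal_sup_aux (K : Type*) [Field K] {n : ℕ} (G H : SimpleGraph (Fin n)) :
    edgeIdeal K (G ⊔ H) = edgeIdeal K G + edgeIdeal K H := by
  unfold edgeIdeal
  rw [Submodule.add_eq_sup, ← Ideal.span_union]
  congr 1
  ext p
  simp only [Set.mem_ofPred_eq, Set.mem_union, SimpleGraph.sup_adj]
  constructor
  · rintro ⟨i, j, h | h, e⟩
    · exact Or.inl ⟨i, j, h, e⟩
    · exact Or.inr ⟨i, j, h, e⟩
  · rintro (⟨i, j, h, e⟩ | ⟨i, j, h, e⟩)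
    · exact ⟨i, j, Or.inl h, e⟩
    · exact ⟨i, j, Or.inr h, e⟩

theorem ideal_nsmul_aux {R : Type*} [CommRing R] (I : Ideal R) (k : ℕ) (hk : k ≠ 0) :
    k • I = I := by
  obtain ⟨m, rfl⟩ := Nat.exists_eq_succ_of_ne_zero hk
  clear hk
  induction m with
  | zero => simp
  | succ m ih => rw [Nat.succ_eq_add_one, succ_nsmul, ih, Submodule.add_eq_sup, sup_idem]

/-- Remark `rmk2.1`: for `n ≥ 6`, `G = A_{n-1}` the anticycle on `[n-1]`, `F` the star
on `[n]` with edges `{i, n}` for `1 ≤ i ≤ n-3`, and `H_n` the graph with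
`E(H_n) = E(G) ∪ E(F)`, one has `I_{H_n}^s = Σ_{i+j=s} I_G^i I_F^j` for all `s ≥ 2`. -/
theorem Hn_power_decomposition
    (K : Type*) [Field K] (n : ℕ) (hn : 6 ≤ n) (s : ℕ) (hs : 2 ≤ s) :
    edgeIdeal K (anticycleIn n (n - 1) ⊔ starF n) ^ s =
      ∑ p ∈ Finset.HasAntidiagonal.antidiagonal s,
        edgeIdeal K (anticycleIn n (n - 1)) ^ p.1 * edgeIdeal K (starF n) ^ p.2 := by
  rw [edgeIdeal_sup_aux, (Commute.all _ _).add_pow']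
  refine Finset.sum_congr rfl fun p hp => ideal_nsmul_aux _ _ ?_
  have h := Finset.HasAntidiagonal.mem_antidiagonal.mp hp
  exact (Nat.choose_pos (by omega)).ne'
end
end

section
/- Fix n ≥ 6 and let F be the star on [n] with edges {i, n} for 1 ≤ i ≤ n−3. Then I_F^2 has linear quotients via the ordering of its minimal monomial generators given by decreasing lexicographic order induced by x_n > x_{n−1} > … > x_1. -/
open MvPolynomial

noncomputable section

def sqGen (n : ℕ) (z i j : Fin n) : Fin n →₀ ℕ :=
  Finsupp.single i 1 + Finsupp.single j 1 + Finsupp.single z 2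

def IsSqGen (n : ℕ) (z : Fin n) (d : Fin n →₀ ℕ) : Prop :=
  ∃ i j : Fin n, i.val + 4 ≤ n ∧ j.val + 4 ≤ n ∧ d = sqGen n z i j

lemma sqGen_degree (n : ℕ) (z i j : Fin n) : (sqGen n z i j).degree = 4 := by
  simp [sqGen, map_add, Finsupp.degree_single]

lemma eq_of_le_of_degree {n : ℕ} {d e : Fin n →₀ ℕ} (h : d ≤ e)
    (hd : d.degree = e.degree) : d = e := by
  obtain ⟨c, rfl⟩ := exists_add_of_le h
  rw [map_add] at hd
  have : c.degree = 0 := by omega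
  rw [Finsupp.degree_eq_zero_iff] at this
  simp [this]

lemma edgeIdeal_star (K : Type*) [Field K] (n : ℕ) (z : Fin n) (hz : z.val + 1 = n) :
    edgeIdeal K (starF n) =
      Ideal.span ((fun s => monomial s (1 : K)) ''
        {d | ∃ i : Fin n, i.val + 4 ≤ n ∧ d = Finsupp.single i 1 + Finsupp.single z 1}) := by
  unfold edgeIdeal
  congr 1
  ext p
  simp only [Set.mem_setOf_eq, Set.mem_image, starF, SimpleGraph.fromRel_adj]
  have hX : ∀ i : Fin n, monomial (Finsupp.single i 1 + Finsupp.single z 1) (1 : K)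
      = X i * X z := by
    intro i
    rw [X, X, monomial_mul, one_mul]
  constructor
  · rintro ⟨i, j, ⟨hne, h | h⟩, rfl⟩
    · have : j = z := Fin.ext (by omega)
      subst this
      exact ⟨_, ⟨i, h.1, rfl⟩, hX i⟩
    · have : i = z := Fin.ext (by omega)
      subst this
      exact ⟨_, ⟨j, h.1, rfl⟩, by rw [hX, mul_comm]⟩
  · rintro ⟨_, ⟨i, hi, rfl⟩, rfl⟩
    refine ⟨i, z, ⟨?_, Or.inl ⟨hi, by omega⟩⟩, hX i⟩
    rintro rfl
    omega

lemma edgeIdeal_star_sq (K : Type*) [Field K] (n : ℕ) (z : Fin n) (hz : z.val + 1 = n) :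
    edgeIdeal K (starF n) ^ 2 =
      Ideal.span ((fun s => monomial s (1 : K)) '' {d | IsSqGen n z d}) := by
  rw [edgeIdeal_star K n z hz, pow_two, Ideal.span_mul_span']
  congr 1
  have h2 : Finsupp.single z 2 = Finsupp.single z 1 + Finsupp.single z 1 := by
    rw [← Finsupp.single_add]
  ext p
  simp only [Set.mem_mul, Set.mem_image, Set.mem_setOf_eq]
  constructor
  · rintro ⟨_, ⟨_, ⟨i, hi, rfl⟩, rfl⟩, _, ⟨_, ⟨j, hj, rfl⟩, rfl⟩, rfl⟩
    refine ⟨_, ⟨i, j, hi, hj, rfl⟩, ?_⟩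
    rw [monomial_mul, one_mul, sqGen, h2]
    congr 1
    abel
  · rintro ⟨_, ⟨i, j, hi, hj, rfl⟩, rfl⟩
    refine ⟨_, ⟨_, ⟨i, hi, rfl⟩, rfl⟩, _, ⟨_, ⟨j, hj, rfl⟩, rfl⟩, ?_⟩
    rw [monomial_mul, one_mul, sqGen, h2]
    congr 1
    abel

lemma monomial_mem_span_iff (K : Type*) [Field K] {n : ℕ} (S : Set (Fin n →₀ ℕ))
    (d : Fin n →₀ ℕ) :
    monomial d (1 : K) ∈ Ideal.span ((fun s => monomial s (1 : K)) '' S) ↔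
      ∃ e ∈ S, e ≤ d := by
  classical
  rw [mem_ideal_span_monomial_image, support_monomial]
  simp

lemma isMinGen_iff (K : Type*) [Field K] (n : ℕ) (z : Fin n) (hz : z.val + 1 = n)
    (d : Fin n →₀ ℕ) :
    IsMinGen (edgeIdeal K (starF n) ^ 2) d ↔ IsSqGen n z d := by
  unfold IsMinGen
  rw [edgeIdeal_star_sq K n z hz]
  simp only [monomial_mem_span_iff]
  constructor
  · rintro ⟨⟨e, he, hed⟩, h⟩
    by_cases h' : e = d
    · exact h' ▸ he
    · exact absurd ⟨e, he, le_rfl⟩ (h e hed h')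
  · intro hd
    refine ⟨⟨d, hd, le_rfl⟩, ?_⟩
    rintro e hed hne ⟨f, hf, hfe⟩
    have : f = d := by
      obtain ⟨i, j, -, -, rfl⟩ := hd
      obtain ⟨i', j', -, -, rfl⟩ := hf
      exact eq_of_le_of_degree (hfe.trans hed) (by rw [sqGen_degree, sqGen_degree])
    subst this
    exact hne (le_antisymm hed hfe)

lemma lexLt_iff {n : ℕ} (d e : Fin n →₀ ℕ) : lexLt d e ↔ toColex d < toColex e := by
  rw [Finsupp.Colex.lt_iff]
  unfold lexLt
  constructor
  · rintro ⟨k, h1, h2⟩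
    exact ⟨k, fun j hj => h2 j hj, h1⟩
  · rintro ⟨k, h1, h2⟩
    exact ⟨k, h2, fun j hj => h1 j hj⟩

lemma sqGen_z {n : ℕ} {z : Fin n} (hz : z.val + 1 = n) {d : Fin n →₀ ℕ}
    (hd : IsSqGen n z d) : d z = 2 := by
  obtain ⟨i, j, hi, hj, rfl⟩ := hd
  have h1 : i ≠ z := by rintro rfl; omega
  have h2 : j ≠ z := by rintro rfl; omega
  simp [sqGen, Finsupp.single_apply, h1, h2]

lemma sqGen_pos {n : ℕ} {z : Fin n} {d : Fin n →₀ ℕ}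
    (hd : IsSqGen n z d) {t : Fin n} (ht : t ≠ z) (hp : 0 < d t) :
    t.val + 4 ≤ n ∧ ∃ j : Fin n, j.val + 4 ≤ n ∧ d = sqGen n z t j := by
  obtain ⟨i, j, hi, hj, rfl⟩ := hd
  by_cases h1 : i = t
  · subst h1
    exact ⟨hi, j, hj, rfl⟩
  by_cases h2 : j = t
  · subst h2
    refine ⟨hj, i, hi, ?_⟩
    unfold sqGen
    abel
  · simp [sqGen, Finsupp.single_apply, h1, h2, ht.symm] at hp

/-- the exchange step -/
lemma exchange {n : ℕ} {z : Fin n} (hz : z.val + 1 = n) {d e : Fin n →₀ ℕ}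
    (hd : IsSqGen n z d) (he : IsSqGen n z e) (h : lexLt d e) :
    ∃ k : Fin n, d k < e k ∧
      ∃ f, IsSqGen n z f ∧ lexLt d f ∧ f ≤ d + Finsupp.single k 1 := by
  obtain ⟨k, hk, hkm⟩ := h
  refine ⟨k, hk, ?_⟩
  have hkz : k ≠ z := by
    rintro rfl
    rw [sqGen_z hz hd, sqGen_z hz he] at hk
    omega
  have hk4 := (sqGen_pos he hkz (by omega)).1
  have : ∃ t, e t < d t := by
    by_contra! hc
    have hle : d ≤ e := hc
    have : d = e := by
      obtain ⟨i, j, -, -, rfl⟩ := hd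
      obtain ⟨i', j', -, -, rfl⟩ := he
      exact eq_of_le_of_degree hle (by rw [sqGen_degree, sqGen_degree])
    subst this
    omega
  obtain ⟨t, ht⟩ := this
  have htz : t ≠ z := by
    rintro rfl
    rw [sqGen_z hz hd, sqGen_z hz he] at ht
    omega
  have htk : t < k := by
    rcases lt_trichotomy t k with h | h | h
    · exact h
    · subst h; omega
    · have := hkm t h; omega
  obtain ⟨-, j, hj, rfl⟩ := sqGen_pos hd htz (by omega)
  refine ⟨sqGen n z k j, ⟨k, j, hk4, hj, rfl⟩, ⟨k, ?_, ?_⟩, ?_⟩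
  · simp [sqGen, Finsupp.single_apply, htk.ne]
  · intro m hm
    simp [sqGen, Finsupp.single_apply, hm.ne, (htk.trans hm).ne]
  · intro m
    simp only [sqGen, Finsupp.add_apply]
    omega

lemma exists_list {n : ℕ} (S : Finset (Fin n →₀ ℕ)) :
    ∃ L : List (Fin n →₀ ℕ), List.Pairwise (fun d e => lexLt e d) L ∧ ∀ d, d ∈ L ↔ d ∈ S := by
  classical
  refine ⟨((S.image toColex).sort (· ≥ ·)).map ofColex, ?_, ?_⟩
  · rw [List.pairwise_map]
    have := (Finset.sortedGT_sort (S.image toColex)).pairwise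
    refine this.imp ?_
    intro a b hab
    rw [lexLt_iff]
    exact hab
  · intro d
    simp

/-- For `n ≥ 6`, the square `I_F^2` of the edge ideal of the star `F` on `[n]` with
edges `{i, n}`, `1 ≤ i ≤ n-3`, has linear quotients via the ordering of its minimal
generators in decreasing lexicographic order induced by `x_n > x_{n-1} > … > x_1`. -/
theorem star_square_lex_linear_quotients
    (K : Type*) [Field K] (n : ℕ) (hn : 6 ≤ n) :
    ∃ L : List (Fin n →₀ ℕ),
      LexDecMinGenOrder (edgeIdeal K (starF n) ^ 2) L ∧ IsLinQuotOrder K L := by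
  classical
  obtain ⟨z, hz⟩ : ∃ z : Fin n, z.val + 1 = n := ⟨⟨n - 1, by omega⟩, by simp; omega⟩
  have hfin : Set.Finite {d | IsSqGen n z d} := by
    refine (Set.finite_range (fun p : Fin n × Fin n => sqGen n z p.1 p.2)).subset ?_
    rintro _ ⟨i, j, -, -, rfl⟩
    exact ⟨(i, j), rfl⟩
  obtain ⟨L, hL, hmem⟩ := exists_list hfin.toFinset
  have hmem' : ∀ d, d ∈ L ↔ IsSqGen n z d := by
    intro d
    rw [hmem]; simp
  refine ⟨L, ⟨hL, fun d => by rw [hmem', isMinGen_iff K n z hz]⟩, ?_⟩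
  intro i _
  have hset : {m : MvPolynomial (Fin n) K |
          ∃ k : Fin L.length, k.val < i.val ∧ m = monomial (L.get k) 1} =
      (fun s => monomial s (1 : K)) '' {e | IsSqGen n z e ∧ lexLt (L.get i) e} := by
    ext m
    simp only [Set.mem_setOf_eq, Set.mem_image]
    rw [List.pairwise_iff_get] at hL
    constructor
    · rintro ⟨k, hk, rfl⟩
      exact ⟨_, ⟨(hmem' _).1 (L.get_mem k), hL k i hk⟩, rfl⟩
    · rintro ⟨e, ⟨he, hlt⟩, rfl⟩
      obtain ⟨k, rfl⟩ := List.get_of_mem ((hmem' e).2 he)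
      refine ⟨k, ?_, rfl⟩
      rw [lexLt_iff] at hlt
      rcases lt_trichotomy k i with h | h | h
      · exact h
      · subst h; exact absurd hlt (lt_irrefl _)
      · have := hL i k h
        rw [lexLt_iff] at this
        exact absurd hlt this.asymm
  rw [hset]
  have hd : IsSqGen n z (L.get i) := (hmem' _).1 (L.get_mem i)
  generalize L.get i = d at hd
  set J := Ideal.span ((fun s => monomial s (1 : K)) '' {e | IsSqGen n z e ∧ lexLt d e}) with hJ
  have hcol : ∀ p, p ∈ Submodule.colon J (Ideal.span {monomial d (1 : K)} : Ideal _) ↔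
      p * monomial d (1 : K) ∈ J := by
    intro p
    rw [Submodule.mem_colon]
    constructor
    · intro h
      exact h _ (Ideal.subset_span rfl)
    · intro h s hs
      obtain ⟨c, rfl⟩ := Ideal.mem_span_singleton'.1 hs
      rw [smul_eq_mul, mul_left_comm]
      exact J.mul_mem_left _ h
  refine ⟨{v | X v * monomial d (1 : K) ∈ J}, le_antisymm ?_ ?_⟩
  · intro p hp
    rw [hcol] at hp
    rw [hJ, mem_ideal_span_monomial_image] at hp
    refine mem_ideal_span_X_image.2 ?_
    intro m hm
    obtain ⟨e, ⟨he, hlt⟩, hle⟩ := hp (m + d) (by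
      rw [mem_support_iff, coeff_mul_monomial, mul_one]
      exact mem_support_iff.1 hm)
    obtain ⟨k, hk, f, hf, hdf, hfle⟩ := exchange hz hd he hlt
    refine ⟨k, ?_, ?_⟩
    · show X k * monomial d (1 : K) ∈ J
      rw [X, monomial_mul, one_mul, hJ, monomial_mem_span_iff, add_comm]
      exact ⟨f, ⟨hf, hdf⟩, hfle⟩
    · have := hle k
      rw [Finsupp.add_apply] at this
      omega
  · rw [Ideal.span_le]
    rintro _ ⟨v, hv, rfl⟩
    exact (hcol _).2 hv
end
end

section
/- Fix n ≥ 6 and let F be the star on [n] with edges {i, n} for 1 ≤ i ≤ n−3. Then I_F^s has linear quotients for every integer s ≥ 1. -/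
open MvPolynomial

noncomputable section

def DD (n s : ℕ) (c : Fin n) : Set (Fin n →₀ ℕ) :=
  {d | d.degree = 2 * s ∧ d c = s ∧ ∀ i, i ≠ c → d i ≠ 0 → i.val + 4 ≤ n}

lemma DD_finite (n s : ℕ) (c : Fin n) : (DD n s c).Finite := by
  apply (Set.finite_Iic (Finsupp.equivFunOnFinite.symm (fun _ : Fin n => 2 * s))).subset
  intro d hd i
  have := Finsupp.le_degree i d
  rw [hd.1] at this
  simpa using this

open scoped Pointwise in
lemma DD_step (K : Type*) [Field K] (n s : ℕ) (hn : 6 ≤ n) (c : Fin n) (hc : c.val = n - 1) :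
    ((fun d => monomial d (1 : K)) '' DD n (s+1) c) =
     ((fun d => monomial d (1 : K)) '' DD n s c) *
      {p | ∃ i j : Fin n, (starF n).Adj i j ∧ p = (X i * X j : MvPolynomial (Fin n) K)} := by
  ext p
  constructor
  · rintro ⟨d, ⟨h1, h2, h3⟩, rfl⟩
    have : ∃ i, i ≠ c ∧ d i ≠ 0 := by
      by_contra! h
      have : d.degree = d c := by
        rw [Finsupp.degree_eq_sum]
        exact Finset.sum_eq_single c (fun b _ hb => h b hb) (by simp)
      omega
    obtain ⟨i, hic, hi⟩ := this
    have hle : Finsupp.single i 1 + Finsupp.single c 1 ≤ d := by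
      intro k
      simp only [Finsupp.add_apply, Finsupp.single_apply]
      grind
    obtain ⟨e, rfl⟩ := exists_add_of_le hle
    refine Set.mem_mul.2 ⟨monomial e 1, ⟨e, ⟨?_, ?_, ?_⟩, rfl⟩, X i * X c, ⟨i, c, ?_, rfl⟩, ?_⟩
    · simp only [map_add, Finsupp.degree_single] at h1
      omega
    · simp [Finsupp.single_apply, hic] at h2
      omega
    · intro k hk hk'
      apply h3 k hk
      simp [hk']
    · rw [starF, SimpleGraph.fromRel_adj]
      exact ⟨hic, Or.inl ⟨h3 i hic hi, hc⟩⟩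
    · simp only [X, monomial_mul, one_mul]
      rw [add_comm]
  · intro h
    obtain ⟨_, ⟨e, ⟨h1, h2, h3⟩, rfl⟩, _, ⟨i, j, hij, rfl⟩, rfl⟩ := Set.mem_mul.1 h
    have key : ∀ i : Fin n, i ≠ c → i.val + 4 ≤ n →
        monomial e (1:K) * (X i * X c) ∈ ((fun d => monomial d (1 : K)) '' DD n (s+1) c) := by
      intro i hic hi
      refine ⟨e + (Finsupp.single i 1 + Finsupp.single c 1), ⟨?_, ?_, ?_⟩, ?_⟩
      · simp only [map_add, Finsupp.degree_single]; omega
      · simp [Finsupp.single_apply, hic]; omega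
      · intro k hk
        by_cases hki : k = i
        · subst hki; intro _; exact hi
        · have := h3 k hk
          simpa [Finsupp.single_apply, Ne.symm hki, Ne.symm hk] using this
      · simp only [X, monomial_mul, one_mul]
    rw [starF, SimpleGraph.fromRel_adj] at hij
    obtain ⟨hne, ⟨g, g'⟩ | ⟨g, g'⟩⟩ := hij
    · obtain rfl : j = c := Fin.ext (by omega)
      exact key i hne g
    · obtain rfl : i = c := Fin.ext (by omega)
      have := key j hne.symm g
      rwa [mul_comm (X j)] at this

lemma pow_eq (K : Type*) [Field K] (n s : ℕ) (hn : 6 ≤ n) (c : Fin n) (hc : c.val = n - 1) :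
    edgeIdeal K (starF n) ^ s = Ideal.span ((fun d => monomial d (1 : K)) '' DD n s c) := by
  induction s with
  | zero =>
    have : DD n 0 c = {0} := by
      ext d
      constructor
      · intro h
        exact (Finsupp.degree_eq_zero_iff d).1 h.1
      · rintro rfl
        simp [DD]
    rw [this]
    simp [Ideal.one_eq_top]
  | succ s ih =>
    rw [DD_step K n s hn c hc, pow_succ, ih, edgeIdeal, Ideal.span_mul_span']

lemma mon_mem {K : Type*} [Field K] {n : ℕ} (D : Set (Fin n →₀ ℕ)) (e : Fin n →₀ ℕ) :
    monomial e (1 : K) ∈ Ideal.span ((fun d => monomial d (1 : K)) '' D) ↔ ∃ d ∈ D, d ≤ e := by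
  rw [mem_ideal_span_monomial_image]
  simp [support_monomial]

lemma exists_list_s7 {n : ℕ} (D : Set (Fin n →₀ ℕ)) (hD : D.Finite) :
    ∃ L : List (Fin n →₀ ℕ), L.Nodup ∧ (∀ d, d ∈ L ↔ d ∈ D) ∧
      L.Pairwise (fun a b => toLex b < toLex a) := by
  classical
  have hp : ((hD.toFinset.map toLex.toEmbedding).sort (· ≥ ·)).Pairwise (· > ·) :=
    Finset.sortedGT_sort _ |>.pairwise
  refine ⟨((hD.toFinset.map toLex.toEmbedding).sort (· ≥ ·)).map ofLex, ?_, ?_, ?_⟩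
  · exact (Finset.sort_nodup _ _).map ofLex.injective
  · intro d
    simp
  · rw [List.pairwise_map]
    exact hp

/-- Corollary `cor3`: for `n ≥ 6` and the star `F` on `[n]` with edges `{i, n}`,
`1 ≤ i ≤ n-3`, the power `I_F^s` has linear quotients for every `s ≥ 1`. -/
theorem star_powers_linear_quotients
    (K : Type*) [Field K] (n : ℕ) (hn : 6 ≤ n) (s : ℕ) (hs : 1 ≤ s) :
    HasLinearQuotients (edgeIdeal K (starF n) ^ s) := by
  right
  obtain ⟨c, hc⟩ : ∃ c : Fin n, c.val = n - 1 := ⟨⟨n - 1, by omega⟩, rfl⟩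
  rw [pow_eq K n s hn c hc]
  obtain ⟨L, hnd, hL, hp⟩ := exists_list_s7 _ (DD_finite n s c)
  have heq : ∀ d ∈ DD n s c, ∀ e ∈ DD n s c, d ≤ e → d = e := by
    intro d hd e he h
    obtain ⟨f, rfl⟩ := exists_add_of_le h
    have h1 := hd.1
    have h2 := he.1
    rw [map_add] at h2
    have : f = 0 := (Finsupp.degree_eq_zero_iff f).1 (by omega)
    simp [this]
  refine ⟨L, hnd, ?_, ?_⟩
  · intro d
    rw [hL, IsMinGen, mon_mem]
    constructor
    · intro hd
      refine ⟨⟨d, hd, le_rfl⟩, ?_⟩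
      intro e he hne hmem
      obtain ⟨d', hd', hle⟩ := (mon_mem _ _).1 hmem
      have := heq d' hd' d hd (hle.trans he)
      subst this
      exact hne (le_antisymm he hle)
    · rintro ⟨⟨d', hd', hle⟩, h⟩
      by_cases hdd : d' = d
      · exact hdd ▸ hd'
      · exact absurd ((mon_mem _ _).2 ⟨d', hd', le_rfl⟩) (h d' hle hdd)
  · intro i hi
    have hset : {m : MvPolynomial (Fin n) K |
          ∃ k : Fin L.length, k.val < i.val ∧ m = monomial (L.get k) 1} =
        (fun d => monomial d (1 : K)) '' {d | ∃ k : Fin L.length, k.val < i.val ∧ d = L.get k} := by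
      ext m
      constructor
      · rintro ⟨k, hk, rfl⟩
        exact ⟨_, ⟨k, hk, rfl⟩, rfl⟩
      · rintro ⟨_, ⟨k, hk, rfl⟩, rfl⟩
        exact ⟨k, hk, rfl⟩
    rw [hset]
    set E := {d | ∃ k : Fin L.length, k.val < i.val ∧ d = L.get k} with hE
    set u := L.get i with hu
    have hcol : ∀ f : MvPolynomial (Fin n) K, f ∈ Submodule.colon
        (Ideal.span ((fun d => monomial d (1 : K)) '' E))
        ((Ideal.span {monomial u (1 : K)} : Ideal (MvPolynomial (Fin n) K)) : Set (MvPolynomial (Fin n) K)) ↔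
        f * monomial u 1 ∈ Ideal.span ((fun d => monomial d (1 : K)) '' E) := by
      intro f
      rw [Submodule.mem_colon]
      constructor
      · intro h
        exact h _ (Ideal.subset_span rfl)
      · intro h p hp
        obtain ⟨q, rfl⟩ := Ideal.mem_span_singleton'.1 hp
        have := Ideal.mul_mem_left _ q h
        rw [smul_eq_mul]
        convert this using 1
        ring
    refine ⟨{j | (X j : MvPolynomial (Fin n) K) * monomial u 1 ∈
        Ideal.span ((fun d => monomial d (1 : K)) '' E)}, ?_⟩
    have huD : u ∈ DD n s c := (hL u).1 (List.get_mem _ _)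
    apply le_antisymm
    · intro f hf
      rw [hcol, mem_ideal_span_monomial_image] at hf
      rw [mem_ideal_span_X_image]
      intro m hm
      obtain ⟨v, ⟨k, hk, hvk⟩, hv⟩ := hf (m + u) (by
        rw [mem_support_iff, coeff_mul_monomial, mul_one]
        exact mem_support_iff.1 hm)
      have hvD : v ∈ DD n s c := (hL v).1 (hvk ▸ List.get_mem _ _)
      have hlt : toLex u < toLex v := by
        rw [hvk]
        exact List.pairwise_iff_get.1 hp k i hk
      obtain ⟨j, hj1, hj2⟩ := Finsupp.Lex.lt_iff.1 hlt
      simp only [ofLex_toLex] at hj1 hj2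
      have hl : ∃ l, v l < u l := by
        by_contra! h
        have := heq u huD v hvD h
        rw [this] at hj2
        omega
      obtain ⟨l, hl⟩ := hl
      have hjc : j ≠ c := by
        rintro rfl
        rw [huD.2.1, hvD.2.1] at hj2
        omega
      have hlc : l ≠ c := by
        rintro rfl
        rw [huD.2.1, hvD.2.1] at hl
        omega
      have hjl : j < l := by
        rcases lt_trichotomy l j with h | h | h
        · have := hj1 l h
          omega
        · subst h; omega
        · exact h
      refine ⟨j, ?_, ?_⟩
      · obtain ⟨e, he⟩ : ∃ e, u = Finsupp.single l 1 + e := by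
          apply exists_add_of_le
          intro k
          simp only [Finsupp.single_apply]
          grind
        have hwD : Finsupp.single j 1 + e ∈ DD n s c := by
          have h1 := huD.1
          have h2 := huD.2.1
          rw [he] at h1 h2
          simp only [map_add, Finsupp.degree_single, Finsupp.add_apply, Finsupp.single_apply, hlc, if_false] at h1 h2
          refine ⟨?_, ?_, ?_⟩
          · simpa only [map_add, Finsupp.degree_single] using h1
          · simpa [Finsupp.single_apply, hjc] using h2
          · intro k hk hk'
            by_cases hkj : k = j
            · subst hkj
              exact hvD.2.2 k hk (by omega)
            · apply huD.2.2 k hk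
              rw [he]
              simp only [Finsupp.add_apply, Finsupp.single_apply, Ne.symm hkj, if_false] at hk' ⊢
              omega
        have hX : (X j : MvPolynomial (Fin n) K) * monomial u 1 =
            monomial (Finsupp.single j 1 + u) 1 := by
          simp only [X, monomial_mul, one_mul]
        rw [Set.mem_setOf_eq, hX, mon_mem]
        refine ⟨Finsupp.single j 1 + e, ?_, ?_⟩
        · obtain ⟨k', hk'⟩ := List.get_of_mem ((hL _).2 hwD)
          refine ⟨k', ?_, hk'.symm⟩
          have hlt' : toLex u < toLex (Finsupp.single j 1 + e) := by
            refine Finsupp.Lex.lt_iff.2 ⟨j, ?_, ?_⟩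
            · intro q hq
              have : l ≠ q := (hq.trans hjl).ne'
              simp [he, Finsupp.single_apply, hq.ne', this]
            · simp [he, Finsupp.single_apply, hjl.ne']
          by_contra hcon
          rcases (not_lt.1 hcon).lt_or_eq with h | h
          · have := List.pairwise_iff_get.1 hp i k' h
            rw [hk'] at this
            exact lt_asymm this hlt'
          · have : i = k' := Fin.ext h
            subst this
            rw [← hk'] at hlt'
            exact lt_irrefl _ hlt'
        · rw [he]
          intro q
          simp only [Finsupp.add_apply]
          omega
      · have := hv j
        simp only [Finsupp.add_apply] at this
        omega
    · rw [Ideal.span_le]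
      rintro _ ⟨j, hj, rfl⟩
      exact (hcol _).2 hj
end
end

section
/- Fix n ≥ 6. Let G = A_{n−1} be the anticycle on [n−1] and let F be the star on [n] with edges {i, n} for 1 ≤ i ≤ n−3. Then the product ideal I_G · I_F has linear quotients via the ordering of its minimal monomial generators given by decreasing lexicographic order induced by x_n > x_{n−1} > … > x_1. -/
open MvPolynomial

noncomputable section

theorem lexLt_asymm' {n : ℕ} {d e : Fin n →₀ ℕ} (h : lexLt d e) (h' : lexLt e d) : False := by
  obtain ⟨k, hk, hk2⟩ := h
  obtain ⟨l, hl, hl2⟩ := h'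
  rcases lt_trichotomy k l with h | h | h
  · have := hk2 l h; omega
  · subst h; omega
  · have := hl2 k h; omega

theorem lexLt_trans' {n : ℕ} {d e f : Fin n →₀ ℕ} (h : lexLt d e) (h' : lexLt e f) :
    lexLt d f := by
  obtain ⟨k, hk, hk2⟩ := h
  obtain ⟨l, hl, hl2⟩ := h'
  rcases lt_trichotomy k l with h | h | h
  · refine ⟨l, by have := hk2 l h; omega, fun m hm => ?_⟩
    rw [hk2 m (h.trans hm), hl2 m hm]
  · subst h
    exact ⟨k, by omega, fun m hm => by rw [hk2 m hm, hl2 m hm]⟩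
  · refine ⟨k, by have := hl2 k h; omega, fun m hm => ?_⟩
    rw [hk2 m hm, hl2 m (h.trans hm)]

theorem lexLt_total' {n : ℕ} (d e : Fin n →₀ ℕ) : d = e ∨ lexLt d e ∨ lexLt e d := by
  by_cases hde : d = e
  · exact Or.inl hde
  right
  have hne : (Finset.univ.filter (fun k : Fin n => d k ≠ e k)).Nonempty := by
    by_contra hcon
    apply hde
    ext k
    by_contra hk
    exact hcon ⟨k, by simp [hk]⟩
  have hmem := Finset.max'_mem _ hne
  set k := Finset.max' _ hne with hkdef
  have hk : d k ≠ e k := by simpa using hmem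
  have hab : ∀ m, k < m → d m = e m := by
    intro m hm
    by_contra hc
    have : m ≤ k := Finset.le_max' _ m (by simp [hc])
    exact absurd hm (not_lt.mpr this)
  rcases lt_or_gt_of_ne hk with h | h
  · exact Or.inl ⟨k, h, hab⟩
  · exact Or.inr ⟨k, h, fun m hm => (hab m hm).symm⟩

theorem exists_lex_list {n : ℕ} (T : Set (Fin n →₀ ℕ)) (hT : T.Finite) :
    ∃ L : List (Fin n →₀ ℕ), List.Pairwise (fun d e => lexLt e d) L ∧ ∀ d, d ∈ L ↔ d ∈ T := by
  classical
  let r : (Fin n →₀ ℕ) → (Fin n →₀ ℕ) → Prop := fun d e => d = e ∨ lexLt e d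
  haveI : IsTrans _ r := ⟨by
    rintro a b c (rfl | h) (rfl | h')
    · exact Or.inl rfl
    · exact Or.inr h'
    · exact Or.inr h
    · exact Or.inr (lexLt_trans' h' h)⟩
  haveI : Std.Antisymm r := ⟨by
    rintro a b (rfl | h) (h2 | h')
    · rfl
    · rfl
    · exact h2.symm
    · exact (lexLt_asymm' h h').elim⟩
  haveI : Std.Total r := ⟨by
    intro a b
    rcases lexLt_total' a b with h | h | h
    · exact Or.inl (Or.inl h)
    · exact Or.inr (Or.inr h)
    · exact Or.inl (Or.inr h)⟩
  refine ⟨hT.toFinset.sort r, ?_, fun d => by simp⟩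
  have h1 := Finset.pairwise_sort hT.toFinset r
  have h2 := Finset.sort_nodup hT.toFinset r
  refine (h1.and h2).imp ?_
  rintro a b ⟨h | h, hne⟩
  · exact absurd h hne
  · exact h

theorem isMinGen_span_iff {K : Type*} [Field K] {n : ℕ} (T : Set (Fin n →₀ ℕ)) (N : ℕ)
    (hdeg : ∀ d ∈ T, ∑ i, d i = N) (d : Fin n →₀ ℕ) :
    IsMinGen (Ideal.span ((fun s => monomial s (1 : K)) '' T)) d ↔ d ∈ T := by
  have key : ∀ e : Fin n →₀ ℕ, monomial e (1 : K) ∈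
      Ideal.span ((fun s => monomial s (1 : K)) '' T) ↔ ∃ t ∈ T, t ≤ e := by
    intro e
    classical
    rw [mem_ideal_span_monomial_image]
    simp [support_monomial]
  unfold IsMinGen
  constructor
  · rintro ⟨h1, h2⟩
    obtain ⟨t, ht, hle⟩ := (key d).1 h1
    by_cases h : t = d
    · exact h ▸ ht
    · exact absurd ((key t).2 ⟨t, ht, le_rfl⟩) (h2 t hle h)
  · intro hd
    refine ⟨(key d).2 ⟨d, hd, le_rfl⟩, fun e he hne hmem => hne ?_⟩
    obtain ⟨t, ht, hle⟩ := (key e).1 hmem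
    have htd : t ≤ d := hle.trans he
    have hs : ∑ i, t i = ∑ i, d i := by rw [hdeg t ht, hdeg d hd]
    have := (Finset.sum_eq_sum_iff_of_le (fun i _ => htd i)).1 hs
    refine le_antisymm he ?_
    intro i
    rw [← this i (Finset.mem_univ i)]
    exact hle i

theorem isLinQuotOrder_of_exchange (K : Type*) [Field K] {n : ℕ} (L : List (Fin n →₀ ℕ))
    (hL : List.Pairwise (fun d e => lexLt e d) L)
    (hex : ∀ u ∈ L, ∀ v ∈ L, lexLt v u → ∃ k, v k < u k ∧ ∃ w ∈ L, lexLt v w ∧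
      w ≤ v + Finsupp.single k 1) : IsLinQuotOrder K L := by
  classical
  have hpw : ∀ i j : Fin L.length, i < j → lexLt (L.get j) (L.get i) := by
    have := List.pairwise_iff_get.1 hL
    exact this
  intro i _
  have hset : {m : MvPolynomial (Fin n) K |
          ∃ k : Fin L.length, k.val < i.val ∧ m = monomial (L.get k) 1} =
      (fun s => monomial s (1 : K)) '' {s | ∃ k : Fin L.length, k.val < i.val ∧ s = L.get k} := by
    ext m
    constructor
    · rintro ⟨k, hk, rfl⟩
      exact ⟨_, ⟨k, hk, rfl⟩, rfl⟩
    · rintro ⟨_, ⟨k, hk, rfl⟩, rfl⟩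
      exact ⟨k, hk, rfl⟩
  refine ⟨{v | ∃ k : Fin L.length, k.val < i.val ∧
    L.get k ≤ L.get i + Finsupp.single v 1}, ?_⟩
  rw [hset]
  ext f
  rw [Ideal.mem_colon_span_singleton, mem_ideal_span_monomial_image]
  erw [mem_ideal_span_X_image]
  constructor
  · intro h e he
    have he' : e + L.get i ∈ (f * monomial (L.get i) (1 : K)).support := by
      rw [mem_support_iff, coeff_mul_monomial, mul_one]
      exact mem_support_iff.1 he
    obtain ⟨s, ⟨k, hk, rfl⟩, hle⟩ := h _ he'
    obtain ⟨v, hv, w, hw, hlt, hwle⟩ := hex (L.get k) (L.get_mem k) (L.get i) (L.get_mem i)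
      (hpw k i hk)
    refine ⟨v, ?_, ?_⟩
    · obtain ⟨j, rfl⟩ := List.get_of_mem hw
      refine ⟨j, ?_, hwle⟩
      by_contra hcon
      rcases lt_or_eq_of_le (not_lt.1 hcon) with h' | h'
      · exact lexLt_asymm' hlt (hpw i j h')
      · have : i = j := Fin.ext h'
        subst this
        exact lexLt_asymm' hlt hlt
    · have := hle v
      simp only [Finsupp.coe_add, Pi.add_apply] at this
      omega
  · intro h e he
    rw [mem_support_iff, coeff_mul_monomial'] at he
    split_ifs at he with hle
    · rw [mul_one] at he
      obtain ⟨v, ⟨k, hk, hkle⟩, hv⟩ := h _ (mem_support_iff.2 he)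
      refine ⟨_, ⟨k, hk, rfl⟩, ?_⟩
      intro x
      have h1 := hkle x
      have h2 := hle x
      simp only [Finsupp.coe_add, Pi.add_apply, Finsupp.single_apply] at h1
      simp only [Finsupp.coe_tsub, Pi.sub_apply] at hv
      split_ifs at h1 with hx
      · subst hx; omega
      · omega
    · exact absurd rfl he

/-- the exponent vector of `x_p x_q x_r x_l` -/
def ex4 {n : ℕ} (l p q r : Fin n) : Fin n →₀ ℕ :=
  Finsupp.single p 1 + Finsupp.single q 1 + Finsupp.single r 1 + Finsupp.single l 1

theorem ex4_apply {n : ℕ} (l p q r x : Fin n) : ex4 l p q r x =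
    (if p = x then 1 else 0) + (if q = x then 1 else 0) + (if r = x then 1 else 0)
      + (if l = x then 1 else 0) := by
  simp [ex4, Finsupp.single_apply]

/-- Sorted index triples of the generators (without the last variable). -/
def GoodT (n p q r : ℕ) : Prop :=
  p ≤ q ∧ q ≤ r ∧ ((r + 4 ≤ n ∧ p + 2 ≤ r) ∨ (r + 2 = n ∧ q + 4 ≤ n ∧ q ≠ 0) ∨
    (r + 3 = n ∧ q + 4 ≤ n ∧ p + 4 ≠ n))

/-- comparison of sorted triples -/
def triLt (p q r p' q' r' : ℕ) : Prop :=
  r < r' ∨ (r = r' ∧ (q < q' ∨ (q = q' ∧ p < p')))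

theorem lexLt_of_triLt {n : ℕ} (l p q r p' q' r' : Fin n) (h1 : p ≤ q) (h2 : q ≤ r)
    (h1' : p' ≤ q') (h2' : q' ≤ r') (h : triLt p q r p' q' r') :
    lexLt (ex4 l p q r) (ex4 l p' q' r') := by
  simp only [Fin.le_def] at *
  rcases h with h | ⟨h, h' | ⟨h', h''⟩⟩
  · refine ⟨r', ?_, fun m hm => ?_⟩
    · simp only [ex4_apply, Fin.ext_iff]
      split_ifs <;> omega
    · simp only [ex4_apply, Fin.ext_iff, Fin.lt_def] at *
      split_ifs <;> omega
  · refine ⟨q', ?_, fun m hm => ?_⟩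
    · simp only [ex4_apply, Fin.ext_iff]
      split_ifs <;> omega
    · simp only [ex4_apply, Fin.ext_iff, Fin.lt_def] at *
      split_ifs <;> omega
  · refine ⟨p', ?_, fun m hm => ?_⟩
    · simp only [ex4_apply, Fin.ext_iff]
      split_ifs <;> omega
    · simp only [ex4_apply, Fin.ext_iff, Fin.lt_def] at *
      split_ifs <;> omega

/-- exponent vectors of generators -/
def genT (n : ℕ) (l : Fin n) : Set (Fin n →₀ ℕ) :=
  {d | ∃ p q r : Fin n, GoodT n p q r ∧ d = ex4 l p q r}

theorem genT_finite (n : ℕ) (l : Fin n) : (genT n l).Finite := by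
  refine (Set.finite_range (fun t : Fin n × Fin n × Fin n => ex4 l t.1 t.2.1 t.2.2)).subset ?_
  rintro d ⟨p, q, r, _, rfl⟩
  exact ⟨(p, q, r), rfl⟩

theorem genT_deg (n : ℕ) (l : Fin n) : ∀ d ∈ genT n l, ∑ i, d i = 4 := by
  rintro d ⟨p, q, r, _, rfl⟩
  simp only [ex4_apply, Finset.sum_add_distrib]
  simp

theorem core_tri {n : ℕ} (hn : 6 ≤ n) (l p q r p' q' r' : Fin n) (hl : l.val + 1 = n)
    (hv : GoodT n p q r) (hu : GoodT n p' q' r') (h : triLt p q r p' q' r') :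
    ∃ k, ex4 l p q r k < ex4 l p' q' r' k ∧ ∃ a b c : Fin n, GoodT n a b c ∧
      triLt p q r a b c ∧ ex4 l a b c ≤ ex4 l p q r + Finsupp.single k 1 := by
  have hle : ∀ (k a b c : Fin n), (∀ x : Fin n, ex4 l a b c x ≤
      ex4 l p q r x + if k = x then 1 else 0) →
      ex4 l a b c ≤ ex4 l p q r + Finsupp.single k 1 := by
    intro k a b c hx x
    simpa [Finsupp.single_apply] using hx x
  unfold GoodT triLt at *
  rcases h with h | ⟨h, h' | ⟨h', h''⟩⟩
  · by_cases c1 : r'.val + 2 = n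
    · by_cases c2 : r.val + 3 = n
      · by_cases c3 : q.val = 0
        · refine ⟨q', ?_, p, q', r, by omega, by omega, hle _ _ _ _ fun x => ?_⟩
          all_goals simp only [ex4_apply, Fin.ext_iff]
          all_goals split_ifs <;> omega
        · refine ⟨r', ?_, p, q, r', by omega, by omega, hle _ _ _ _ fun x => ?_⟩
          all_goals simp only [ex4_apply, Fin.ext_iff]
          all_goals split_ifs <;> omega
      · refine ⟨r', ?_, q, r, r', by omega, by omega, hle _ _ _ _ fun x => ?_⟩
        all_goals simp only [ex4_apply, Fin.ext_iff]
        all_goals split_ifs <;> omega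
    · refine ⟨r', ?_, p, q, r', by omega, by omega, hle _ _ _ _ fun x => ?_⟩
      all_goals simp only [ex4_apply, Fin.ext_iff]
      all_goals split_ifs <;> omega
  · refine ⟨q', ?_, p, q', r, by omega, by omega, hle _ _ _ _ fun x => ?_⟩
    all_goals simp only [ex4_apply, Fin.ext_iff]
    all_goals split_ifs <;> omega
  · refine ⟨p', ?_, p', q', r', by omega, by omega, hle _ _ _ _ fun x => ?_⟩
    all_goals simp only [ex4_apply, Fin.ext_iff]
    all_goals split_ifs <;> omega

theorem core {n : ℕ} (hn : 6 ≤ n) (l : Fin n) (hl : l.val + 1 = n) :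
    ∀ u ∈ genT n l, ∀ v ∈ genT n l, lexLt v u → ∃ k, v k < u k ∧ ∃ w ∈ genT n l, lexLt v w ∧
      w ≤ v + Finsupp.single k 1 := by
  rintro u ⟨p', q', r', hu, rfl⟩ v ⟨p, q, r, hv, rfl⟩ hlt
  have htri : triLt p q r p' q' r' := by
    by_contra hcon
    by_cases heq : p = p' ∧ q = q' ∧ r = r'
    · obtain ⟨rfl, rfl, rfl⟩ := heq
      exact lexLt_asymm' hlt hlt
    · refine lexLt_asymm' hlt (lexLt_of_triLt l p' q' r' p q r hu.1 hu.2.1 hv.1 hv.2.1 ?_)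
      simp only [Fin.ext_iff] at heq
      unfold triLt at *
      omega
  obtain ⟨k, hk, a, b, c, hg, ht, hle⟩ := core_tri hn l p q r p' q' r' hl hv hu htri
  exact ⟨k, hk, _, ⟨a, b, c, hg, rfl⟩,
    lexLt_of_triLt l p q r a b c hv.1 hv.2.1 hg.1 hg.2.1 ht, hle⟩

theorem anti_adj_iff {n : ℕ} (hn : 6 ≤ n) (a b : Fin n) (hab : a.val < b.val) :
    (anticycleIn n (n - 1)).Adj a b ↔ b.val + 2 ≤ n ∧ a.val + 2 ≤ b.val ∧
      ¬ (a.val = 0 ∧ b.val + 2 = n) := by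
  simp only [anticycleIn, ne_eq, Fin.ext_iff]
  by_cases hb : b.val + 2 ≤ n
  · have h1 : (a.val + 1) % (n - 1) = a.val + 1 := Nat.mod_eq_of_lt (by omega)
    rw [h1]
    by_cases hb2 : b.val + 2 = n
    · have h2 : (b.val + 1) % (n - 1) = 0 := by
        rw [show b.val + 1 = n - 1 by omega]; exact Nat.mod_self _
      rw [h2]; omega
    · have h2 : (b.val + 1) % (n - 1) = b.val + 1 := Nat.mod_eq_of_lt (by omega)
      rw [h2]; omega
  · constructor
    · rintro ⟨_, _, h, _⟩; omega
    · rintro ⟨h, _⟩; omega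

theorem prod_eq (K : Type*) [Field K] {n : ℕ} (hn : 6 ≤ n) (l : Fin n) (hl : l.val + 1 = n) :
    edgeIdeal K (anticycleIn n (n - 1)) * edgeIdeal K (starF n) =
      Ideal.span ((fun s => monomial s (1 : K)) '' genT n l) := by
  have hX : ∀ a b c d : Fin n, (X a * X b * (X c * X d) : MvPolynomial (Fin n) K) =
      monomial (ex4 d a b c) 1 := by
    intro a b c d
    simp only [X, monomial_mul, ex4, mul_one, add_assoc]
  have hstar : ∀ c : Fin n, c.val + 4 ≤ n → (starF n).Adj c l := by
    intro c hc
    simp only [starF, SimpleGraph.fromRel_adj, ne_eq, Fin.ext_iff]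
    omega
  unfold edgeIdeal
  rw [Ideal.span_mul_span]
  congr 1
  ext f
  rw [Set.mem_mul]
  constructor
  · rintro ⟨_, ⟨a, b, hab, rfl⟩, _, ⟨c, d, hcd, rfl⟩, rfl⟩
    have main : ∀ a b c : Fin n, a.val < b.val → (anticycleIn n (n - 1)).Adj a b →
        c.val + 4 ≤ n → ex4 l a b c ∈ genT n l := by
      intro a b c hlt hadj hc
      rw [anti_adj_iff hn a b hlt] at hadj
      rcases lt_or_ge c.val a.val with h | h
      · refine ⟨c, a, b, by unfold GoodT; omega, ?_⟩
        simp only [ex4]; abel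
      rcases lt_or_ge c.val b.val with h' | h'
      · refine ⟨a, c, b, by unfold GoodT; omega, ?_⟩
        simp only [ex4]; abel
      · exact ⟨a, b, c, by unfold GoodT; omega, rfl⟩
    have main2 : ∀ c : Fin n, c.val + 4 ≤ n → ex4 l a b c ∈ genT n l := by
      intro c hc
      rcases lt_trichotomy a.val b.val with h | h | h
      · exact main a b c h hab hc
      · exact absurd (Fin.ext h) hab.ne
      · have := main b a c h hab.symm hc
        have e : ex4 l b a c = ex4 l a b c := by simp only [ex4]; abel
        rwa [e] at this
    simp only [starF, SimpleGraph.fromRel_adj] at hcd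
    rcases hcd.2 with ⟨h1, h2⟩ | ⟨h1, h2⟩
    · have : d = l := Fin.ext (by omega)
      subst this
      exact ⟨_, main2 c h1, (hX _ _ _ _).symm⟩
    · have : c = l := Fin.ext (by omega)
      subst this
      exact ⟨_, main2 d h1, by rw [mul_comm (X c) (X d)]; exact (hX _ _ _ _).symm⟩
  · rintro ⟨_, ⟨p, q, r, hg, rfl⟩, rfl⟩
    have fin : ∀ a b c : Fin n, a.val < b.val → (anticycleIn n (n - 1)).Adj a b →
        c.val + 4 ≤ n → ex4 l a b c = ex4 l p q r →
        ∃ x ∈ {p : MvPolynomial (Fin n) K | ∃ i j, (anticycleIn n (n - 1)).Adj i j ∧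
          p = X i * X j}, ∃ y ∈ {p : MvPolynomial (Fin n) K | ∃ i j, (starF n).Adj i j ∧
          p = X i * X j}, x * y = monomial (ex4 l p q r) 1 := by
      intro a b c _ hadj hc he
      exact ⟨_, ⟨a, b, hadj, rfl⟩, _, ⟨c, l, hstar c hc, rfl⟩, by rw [hX, he]⟩
    unfold GoodT at hg
    by_cases h : r.val + 2 = n
    · refine fin q r p (by omega) ((anti_adj_iff hn _ _ (by omega)).2 (by omega)) (by omega) ?_
      simp only [ex4]; abel
    · refine fin p r q (by omega) ((anti_adj_iff hn _ _ (by omega)).2 (by omega)) (by omega) ?_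
      simp only [ex4]; abel

/-- Lemma `IGIF-lemma`: for `n ≥ 6`, `G = A_{n-1}` the anticycle on `[n-1]` and `F` the
star on `[n]` with edges `{i, n}`, `1 ≤ i ≤ n-3`, the product `I_G · I_F` has linear
quotients via the ordering of its minimal generators in decreasing lexicographic order
induced by `x_n > x_{n-1} > … > x_1`. -/
theorem IGIF_lex_linear_quotients
    (K : Type*) [Field K] (n : ℕ) (hn : 6 ≤ n) :
    ∃ L : List (Fin n →₀ ℕ),
      LexDecMinGenOrder (edgeIdeal K (anticycleIn n (n - 1)) * edgeIdeal K (starF n)) L ∧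
      IsLinQuotOrder K L := by
  have hl : (⟨n - 1, by omega⟩ : Fin n).val + 1 = n := by simp only; omega
  generalize (⟨n - 1, by omega⟩ : Fin n) = l at hl
  obtain ⟨L, hL, hmem⟩ := exists_lex_list (genT n l) (genT_finite n l)
  refine ⟨L, ⟨hL, fun d => ?_⟩, isLinQuotOrder_of_exchange K L hL ?_⟩
  · rw [prod_eq K hn l hl, isMinGen_span_iff _ 4 (genT_deg n l)]
    exact hmem d
  · simp only [hmem]
    exact core hn l hl

end
end

section
/- Let M_1 and M_2 be monic monomials in S = K[x_1,…,x_n] of the same degree s ≥ 3 with M_1 >_lex M_2, written M_1 = x_{i_1}⋯x_{i_s} and M_2 = x_{j_1}⋯x_{j_s} with i_1 ≤ … ≤ i_s and j_1 ≤ … ≤ j_s. Let t be the unique natural number such that M_1 and M_2 agree in order t (i.e., t = 0 and i_s > j_s, or 1 ≤ t ≤ s−1 with i_l = j_l for s−t+1 ≤ l ≤ s and i_{s−t} ≠ j_{s−t}; in either case i_{s−t} > j_{s−t}). Then for any index l ∈ {1, …, s−t}, the monomial M_3 := (x_{i_{s−t}} / x_{j_l}) · M_2 satisfies: M_3 >_lex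 M_2; M_3 / gcd(M_3, M_2) is a single variable (namely x_{i_{s−t}}); and M_3 / gcd(M_3, M_2) divides M_1 / gcd(M_1, M_2). -/
open MvPolynomial

noncomputable section

theorem lexproj_aux (n s p : ℕ) (i j : ℕ → Fin n) (hi : Monotone i) (hj : Monotone j)
    (hp : p < s) (hlt : i p < j p) (hag : ∀ l, p < l → l < s → i l = j l) :
    (∑ k ∈ Finset.range s, Finsupp.single (i k) 1 : Fin n →₀ ℕ) (j p) <
      (∑ k ∈ Finset.range s, Finsupp.single (j k) 1 : Fin n →₀ ℕ) (j p) ∧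
    ∀ m, j p < m → (∑ k ∈ Finset.range s, Finsupp.single (i k) 1 : Fin n →₀ ℕ) m =
      (∑ k ∈ Finset.range s, Finsupp.single (j k) 1 : Fin n →₀ ℕ) m := by
  simp only [Finsupp.finsetSum_apply, Finsupp.single_apply]
  refine ⟨Finset.sum_lt_sum ?_ ⟨p, Finset.mem_range.2 hp, ?_⟩, ?_⟩
  · intro k hk
    rcases le_or_gt k p with h | h
    · rw [if_neg (lt_of_le_of_lt (hi h) hlt).ne]
      exact Nat.zero_le _
    · rw [hag k h (Finset.mem_range.1 hk)]
  · rw [if_neg hlt.ne, if_pos rfl]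
    exact Nat.zero_lt_one
  · intro m hm
    refine Finset.sum_congr rfl ?_
    intro k hk
    rcases le_or_gt k p with h | h
    · rw [if_neg (lt_of_le_of_lt (hi h) (hlt.trans hm)).ne,
        if_neg (lt_of_le_of_lt (hj h) hm).ne]
    · rw [hag k h (Finset.mem_range.1 hk)]

/-- Lemma `lem1.8`(ii) (lexicographical projections): with `M₁ >_lex M₂` of common degree
`s ≥ 3` agreeing in order `t`, and `l ∈ {1, …, s-t}` (0-indexed: `q ∈ {0, …, s-t-1}`),
the monomial `M₃ = (x_{i_{s-t}} / x_{j_l}) M₂` satisfies `M₃ >_lex M₂`,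
`M₃ / gcd(M₃, M₂) = x_{i_{s-t}}`, and `M₃ / gcd(M₃, M₂) ∣ M₁ / gcd(M₁, M₂)`.
Monomials are encoded by their exponent vectors `d₁, d₂, d₃`; the quotient
`M / gcd(M, N)` is the monomial with exponent vector `dM - dN` (truncated subtraction)
and divisibility of monomials is `≤` of exponent vectors. -/
theorem lexicographical_projection
    (n s : ℕ) (hs : 3 ≤ s) (i j : ℕ → Fin n) (hi : Monotone i) (hj : Monotone j)
    (hlex : lexLt (∑ k ∈ Finset.range s, Finsupp.single (j k) 1)
                  (∑ k ∈ Finset.range s, Finsupp.single (i k) 1))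
    (t : ℕ) (ht : t ≤ s - 1) (hagree : AgreeOrder n s i j t)
    (q : ℕ) (hq : q ≤ s - t - 1) :
    lexLt (∑ k ∈ Finset.range s, Finsupp.single (j k) 1)
        ((∑ k ∈ Finset.range s, Finsupp.single (j k) 1)
          + Finsupp.single (i (s - t - 1)) 1 - Finsupp.single (j q) 1) ∧
    ((∑ k ∈ Finset.range s, Finsupp.single (j k) 1)
          + Finsupp.single (i (s - t - 1)) 1 - Finsupp.single (j q) 1)
        - (∑ k ∈ Finset.range s, Finsupp.single (j k) 1)
      = Finsupp.single (i (s - t - 1)) 1 ∧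
    ((∑ k ∈ Finset.range s, Finsupp.single (j k) 1)
          + Finsupp.single (i (s - t - 1)) 1 - Finsupp.single (j q) 1)
        - (∑ k ∈ Finset.range s, Finsupp.single (j k) 1)
      ≤ (∑ k ∈ Finset.range s, Finsupp.single (i k) 1)
        - (∑ k ∈ Finset.range s, Finsupp.single (j k) 1) := by
  obtain ⟨p, hpdef⟩ : ∃ p, p = s - t - 1 := ⟨_, rfl⟩
  have hps : p < s := by omega
  have hag : ∀ l, p < l → l < s → i l = j l := by
    intro l h1 h2
    unfold AgreeOrder at hagree
    split_ifs at hagree with h0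
    · omega
    · exact hagree.1 l (by omega) (by omega)
  have hne : i p ≠ j p := by
    unfold AgreeOrder at hagree
    split_ifs at hagree with h0
    · subst h0
      rw [hpdef]
      exact hagree.ne'
    · rw [hpdef]
      exact hagree.2
  rw [← hpdef] at hq ⊢
  have hlt : j p < i p := by
    rcases lt_or_gt_of_ne hne with h | h
    · exfalso
      obtain ⟨h1, h2⟩ := lexproj_aux n s p i j hi hj hps h hag
      obtain ⟨k, hk1, hk2⟩ := hlex
      rcases lt_trichotomy k (j p) with h3 | h3 | h3
      · have := hk2 _ h3
        omega
      · subst h3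
        omega
      · have := h2 _ h3
        omega
    · exact h
  obtain ⟨h1, -⟩ := lexproj_aux n s p j i hj hi hps hlt (fun l a b => (hag l a b).symm)
  have hb : j q < i p := lt_of_le_of_lt (hj hq) hlt
  generalize (∑ k ∈ Finset.range s, Finsupp.single (j k) 1 : Fin n →₀ ℕ) = c at *
  generalize (∑ k ∈ Finset.range s, Finsupp.single (i k) 1 : Fin n →₀ ℕ) = d at *
  have key : c + Finsupp.single (i p) 1 - Finsupp.single (j q) 1 - c
      = Finsupp.single (i p) 1 := by
    ext m
    simp only [Finsupp.tsub_apply, Finsupp.add_apply, Finsupp.single_apply]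
    by_cases h3 : i p = m
    · subst h3
      rw [if_pos rfl, if_neg hb.ne]
      omega
    · rw [if_neg h3]
      omega
  refine ⟨⟨i p, ?_, ?_⟩, key, ?_⟩
  · simp only [Finsupp.tsub_apply, Finsupp.add_apply, Finsupp.single_apply]
    rw [if_pos trivial, if_neg hb.ne]
    omega
  · intro m hm
    simp only [Finsupp.tsub_apply, Finsupp.add_apply, Finsupp.single_apply]
    rw [if_neg hm.ne, if_neg (hb.trans hm).ne]
    omega
  · rw [key]
    intro m
    simp only [Finsupp.tsub_apply, Finsupp.single_apply]
    split_ifs with h3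
    · subst h3
      omega
    · exact Nat.zero_le _
end
end

section
/- Let G_0 be a graph on [n−1], let F_0 be a star graph on [n] with center n, let s ≥ 2, and let H_0 be the graph on [n] with edge set E(G_0) ∪ E(F_0). Then the set of minimal monomial generators of I_{H_0}^s equals the union over all pairs of integers i, j ≥ 0 with i + j = s of the sets of minimal monomial generators of the ideals I_{G_0}^i · I_{F_0}^j; in particular I_{H_0}^s = Σ_{i+j=s, i,j ≥ 0} I_{G_0}^i I_{F_0}^j. -/
open MvPolynomial

noncomputable section

def HomGen {K : Type*} [Field K] {n : ℕ} (I : Ideal (MvPolynomial (Fin n) K))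
    (S : Set (Fin n →₀ ℕ)) (k : ℕ) : Prop :=
  I = Ideal.span ((fun d => monomial d (1 : K)) '' S) ∧ ∀ d ∈ S, d.degree = k

theorem HomGen.minGen {K : Type*} [Field K] {n : ℕ} {I : Ideal (MvPolynomial (Fin n) K)}
    {S : Set (Fin n →₀ ℕ)} {k : ℕ} (h : HomGen I S k) (d : Fin n →₀ ℕ) :
    IsMinGen I d ↔ d ∈ S := by
  have key : ∀ e : Fin n →₀ ℕ, monomial e (1 : K) ∈ I ↔ ∃ f ∈ S, f ≤ e := by
    intro e
    rw [h.1, mem_ideal_span_monomial_image]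
    classical
    simp [support_monomial]
  unfold IsMinGen
  simp only [key]
  constructor
  · rintro ⟨⟨f, hf, hfd⟩, hmin⟩
    by_cases hfe : f = d
    · exact hfe ▸ hf
    · exact absurd ⟨f, hf, le_rfl⟩ (hmin f hfd hfe)
  · intro hd
    refine ⟨⟨d, hd, le_rfl⟩, ?_⟩
    rintro e hed hne ⟨f, hf, hfe⟩
    have hfd := hfe.trans hed
    have h1 : f = d := by
      obtain ⟨g, rfl⟩ := exists_add_of_le hfd
      have h2 := h.2 _ hd
      rw [map_add, h.2 _ hf] at h2
      have h3 : g.degree = 0 := by omega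
      rw [Finsupp.degree_eq_zero_iff] at h3
      simp [h3]
    exact hne (le_antisymm hed (h1 ▸ hfe))

theorem HomGen.mul {K : Type*} [Field K] {n : ℕ} {I J : Ideal (MvPolynomial (Fin n) K)}
    {S T : Set (Fin n →₀ ℕ)} {k l : ℕ} (h : HomGen I S k) (h' : HomGen J T l) :
    HomGen (I * J) (Set.image2 (· + ·) S T) (k + l) := by
  constructor
  · rw [h.1, h'.1, Ideal.span_mul_span']
    congr 1
    ext p
    simp only [Set.mem_mul, Set.mem_image, Set.mem_image2]
    constructor
    · rintro ⟨_, ⟨a, ha, rfl⟩, _, ⟨b, hb, rfl⟩, rfl⟩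
      exact ⟨a + b, ⟨a, ha, b, hb, rfl⟩, by simp [monomial_mul]⟩
    · rintro ⟨_, ⟨a, ha, b, hb, rfl⟩, rfl⟩
      exact ⟨_, ⟨a, ha, rfl⟩, _, ⟨b, hb, rfl⟩, by simp [monomial_mul]⟩
  · rintro _ ⟨a, ha, b, hb, rfl⟩
    simp [h.2 a ha, h'.2 b hb]

theorem HomGen.pow {K : Type*} [Field K] {n : ℕ} {I : Ideal (MvPolynomial (Fin n) K)}
    {S : Set (Fin n →₀ ℕ)} {k : ℕ} (h : HomGen I S k) (m : ℕ) :
    ∃ T, HomGen (I ^ m) T (m * k) := by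
  induction m with
  | zero =>
    refine ⟨{0}, ?_, by simp⟩
    simp only [pow_zero, Set.image_singleton]
    rw [Ideal.one_eq_top, ← C_apply, C_1, Ideal.span_singleton_one]
  | succ m ih =>
    obtain ⟨T, hT⟩ := ih
    rw [pow_succ, Nat.succ_mul]
    exact ⟨_, hT.mul h⟩

theorem edgeIdeal_homGen (K : Type*) [Field K] {n : ℕ} (G : SimpleGraph (Fin n)) :
    HomGen (edgeIdeal K G)
      {d | ∃ i j : Fin n, G.Adj i j ∧ d = Finsupp.single i 1 + Finsupp.single j 1} 2 := by
  constructor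
  · unfold edgeIdeal
    congr 1
    ext p
    simp only [Set.mem_image, Set.mem_ofPred_eq]
    constructor
    · rintro ⟨i, j, h, rfl⟩
      exact ⟨_, ⟨i, j, h, rfl⟩, by simp [X, monomial_mul]⟩
    · rintro ⟨_, ⟨i, j, h, rfl⟩, rfl⟩
      exact ⟨i, j, h, by simp [X, monomial_mul]⟩
  · rintro _ ⟨i, j, h, rfl⟩
    simp

theorem edgeIdeal_sup (K : Type*) [Field K] {n : ℕ} (G F : SimpleGraph (Fin n)) :
    edgeIdeal K (G ⊔ F) = edgeIdeal K G + edgeIdeal K F := by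
  unfold edgeIdeal
  rw [Submodule.add_eq_sup, ← Ideal.span_union]
  congr 1
  ext p
  simp only [Set.mem_union, Set.mem_ofPred_eq, SimpleGraph.sup_adj]
  constructor
  · rintro ⟨i, j, h | h, rfl⟩
    exacts [Or.inl ⟨i, j, h, rfl⟩, Or.inr ⟨i, j, h, rfl⟩]
  · rintro (⟨i, j, h, rfl⟩ | ⟨i, j, h, rfl⟩)
    exacts [⟨i, j, Or.inl h, rfl⟩, ⟨i, j, Or.inr h, rfl⟩]

theorem ideal_nsmul_self {R : Type*} [CommRing R] (I : Ideal R) (m : ℕ) (hm : m ≠ 0) :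
    m • I = I := by
  induction m with
  | zero => exact absurd rfl hm
  | succ m ih =>
    rcases Nat.eq_zero_or_pos m with rfl | h
    · simp
    · rw [succ_nsmul, ih h.ne', Submodule.add_eq_sup, sup_idem]

theorem ideal_add_pow {R : Type*} [CommRing R] (I J : Ideal R) (s : ℕ) :
    (I + J) ^ s = ∑ p ∈ Finset.HasAntidiagonal.antidiagonal s, I ^ p.1 * J ^ p.2 := by
  rw [(Commute.all I J).add_pow']
  refine Finset.sum_congr rfl fun p hp => ideal_nsmul_self _ _ ?_
  rw [Finset.HasAntidiagonal.mem_antidiagonal] at hp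
  exact (Nat.choose_pos (by omega)).ne'

/-- For `G₀` a graph on `[n-1]`, `F₀` a star on `[n]` with center `n`, `s ≥ 2`, and
`H₀` the graph with `E(H₀) = E(G₀) ∪ E(F₀)`: the minimal monomial generators of
`I_{H₀}^s` are exactly the union of the minimal monomial generators of the ideals
`I_{G₀}^i I_{F₀}^j` with `i + j = s`, and `I_{H₀}^s = Σ_{i+j=s} I_{G₀}^i I_{F₀}^j`. -/
theorem min_gens_of_power_union
    (K : Type*) [Field K] (n : ℕ) (hn : 1 ≤ n) (s : ℕ) (hs : 2 ≤ s)
    (G0 F0 : SimpleGraph (Fin n))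
    -- `G0` is a graph on `[n-1]` : no edge of `G0` touches the vertex `n`
    (hG0 : ∀ i j : Fin n, G0.Adj i j → i.val < n - 1 ∧ j.val < n - 1)
    -- `F0` is a star on `[n]` with center `n` : every edge of `F0` contains the vertex `n`
    (hF0 : ∀ i j : Fin n, F0.Adj i j → i.val = n - 1 ∨ j.val = n - 1) :
    (∀ d : Fin n →₀ ℕ,
      IsMinGen (edgeIdeal K (G0 ⊔ F0) ^ s) d ↔
        ∃ i j : ℕ, i + j = s ∧ IsMinGen (edgeIdeal K G0 ^ i * edgeIdeal K F0 ^ j) d) ∧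
    edgeIdeal K (G0 ⊔ F0) ^ s =
      ∑ p ∈ Finset.HasAntidiagonal.antidiagonal s, edgeIdeal K G0 ^ p.1 * edgeIdeal K F0 ^ p.2 := by
  have hsum : edgeIdeal K (G0 ⊔ F0) ^ s =
      ∑ p ∈ Finset.HasAntidiagonal.antidiagonal s,
        edgeIdeal K G0 ^ p.1 * edgeIdeal K F0 ^ p.2 := by
    rw [edgeIdeal_sup, ideal_add_pow]
  refine ⟨?_, hsum⟩
  choose A hA using (edgeIdeal_homGen K G0).pow
  choose B hB using (edgeIdeal_homGen K F0).pow
  have hAB := fun i j => (hA i).mul (hB j)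
  have hH : HomGen (edgeIdeal K (G0 ⊔ F0) ^ s)
      {d | ∃ i j : ℕ, i + j = s ∧ d ∈ Set.image2 (· + ·) (A i) (B j)} (s * 2) := by
    constructor
    · rw [hsum, Ideal.sum_eq_sup]
      apply le_antisymm
      · refine Finset.sup_le fun p hp => ?_
        rw [(hAB p.1 p.2).1]
        apply Ideal.span_mono
        apply Set.image_mono
        intro d hd
        exact ⟨p.1, p.2, Finset.HasAntidiagonal.mem_antidiagonal.1 hp, hd⟩
      · rw [Ideal.span_le]
        rintro _ ⟨d, ⟨i, j, hij, hd⟩, rfl⟩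
        have hm : monomial d (1 : K) ∈ edgeIdeal K G0 ^ i * edgeIdeal K F0 ^ j := by
          rw [(hAB i j).1]
          exact Ideal.subset_span ⟨d, hd, rfl⟩
        exact Finset.le_sup (f := fun p : ℕ × ℕ => edgeIdeal K G0 ^ p.1 * edgeIdeal K F0 ^ p.2)
          (Finset.HasAntidiagonal.mem_antidiagonal.2 hij : (i, j) ∈ _) hm
    · rintro d ⟨i, j, hij, hd⟩
      rw [(hAB i j).2 d hd, ← hij, Nat.add_mul]
  intro d
  rw [hH.minGen]
  simp only [(hAB _ _).minGen, Set.mem_ofPred_eq]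
end
end
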